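/- arXiv:1111.4457 — 3 statements merged into one kernel-verified Lean document; each statement's English description precedes it below -/
import Mathlib

section
/- Assume the SOSC holds with respect to J, and suppose c_F ∈ (0,1] and C_F ≥ 1 satisfy c_F r^D ≤ H^D(F ∩ B(x,r)) ≤ C_F r^D for all x ∈ F and 0 < r ≤ diam F. Set ε₀ := H^D(F)^{1/D} and c := max{4 c_F^{−1/D}, diam(J) · H^D(F)^{−1/D}} − C_F^{−1/D}. If lim_{δ→0⁺} (1/ln(1/δ)) ∫_δ^{ε₀} ε^{D−d+1} H^{d−1}(∂F(ε)) ε^{−1} dε = 0, then for Lebesgue-almost every ε ∈ (0,ε₀): H^{d−1}({z ∈ ∂F(ε) : d(z, ℝ^d ∖ J) > cε}) = 0; that is, for almost every ε the surface measure of the parallel set is concentrated in the closed cε-neighborhood of the closure of the complement of J. -/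
open MeasureTheory Metric Filter Set
open scoped ENNReal Topology

/-!
Call a point inner if it is closer to `F` than to the complement of `O = interior J`. By the open
set condition, `S i` maps inner points at distance `ε / r i` from `F` to inner points at distance
`ε`, and the images for different `i` are disjoint. Hence `G ε = ε ^ (D - d + 1) * μH[d - 1] (inner
points at distance ε)` satisfies the renewal inequality `∑ i, r i ^ D * G (ε / r i) ≤ G ε`. As
`∑ i, r i ^ D = 1`, the integral of `G` against `dε / ε` over any short window is regained at all
smaller scales, so the integral over `(δ, ε₀]` grows at least like a positive multiple of
`log (1 / δ)` unless `G = 0` almost everywhere. The growth hypothesis excludes the former, and since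
`1 ≤ c`, every point of `∂F(ε)` at distance more than `c * ε` from the complement of `J` is inner.

Two facts link this to the integral of the surface measure: for almost every `ε`, `∂F(ε)` is the
whole level set of the distance to `F`, since a level set differs from it only at local maxima and
these have countably many values; and Eilenberg's inequality bounds the integrated measure of the
level sets by a volume, so that the integral over `(δ, ε₀]` is finite.
-/

section HausdorffSlices

variable {X : Type*} [EMetricSpace X]

/-- The sequence `u` is an open cover of `A` by sets of diameter at most `η` whose `s`-dimensional
Hausdorff sum is less than `β`. As in `Measure.hausdorffMeasure_apply`, empty sets contribute `0` to
the sum even if `s = 0`. -/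
structure IsFineOpenCover (s : ℝ) (A : Set X) (η β : ℝ≥0∞) (u : ℕ → Set X) : Prop where
  isOpen : ∀ i, IsOpen (u i)
  subset_iUnion : A ⊆ ⋃ i, u i
  ediam_le : ∀ i, ediam (u i) ≤ η
  tsum_lt : ∑' i, (⨆ _ : (u i).Nonempty, ediam (u i) ^ s) < β

lemma exists_isOpen_superset_ediam_rpow_le {s : ℝ} (hs : 0 ≤ s) {t : Set X} {η γ : ℝ≥0∞}
    (ht : ediam t < η) (hγ : γ ≠ 0) :
    ∃ u, IsOpen u ∧ t ⊆ u ∧ ediam u ≤ η ∧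
      (⨆ _ : u.Nonempty, ediam u ^ s) ≤ (⨆ _ : t.Nonempty, ediam t ^ s) + γ := by
  have tendsto_diam : Tendsto (fun e : NNReal => ediam t + 2 * (e : ℝ≥0∞)) (𝓝[>] 0)
      (𝓝 (ediam t)) := by
    have hcont : Continuous fun e : NNReal => ediam t + 2 * (e : ℝ≥0∞) :=
      continuous_const.add ((ENNReal.continuous_const_mul (by simp)).comp ENNReal.continuous_coe)
    simpa using (hcont.tendsto 0).mono_left (nhdsWithin_le_nhds (s := Ioi 0))
  have tendsto_rpow : Tendsto (fun e : NNReal => (ediam t + 2 * (e : ℝ≥0∞)) ^ s) (𝓝[>] 0)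
      (𝓝 (ediam t ^ s)) :=
    (ENNReal.continuous_rpow_const.tendsto _).comp tendsto_diam
  have rpow_lt : ediam t ^ s < ediam t ^ s + γ :=
    ENNReal.lt_add_right (ENNReal.rpow_ne_top_of_nonneg hs ht.ne_top) hγ
  obtain ⟨e, he_diam, he_rpow, he_pos⟩ :=
    ((tendsto_diam.eventually_lt_const ht).and ((tendsto_rpow.eventually_lt_const rpow_lt).and
      self_mem_nhdsWithin)).exists
  refine ⟨thickening e t, isOpen_thickening, self_subset_thickening (by exact_mod_cast he_pos) t,
    (ediam_thickening_le e).trans he_diam.le, iSup_le fun hne => ?_⟩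
  have ht_ne : t.Nonempty := nonempty_iff_ne_empty.2 fun h => by simp [h] at hne
  simp only [ht_ne, iSup_pos]
  exact (ENNReal.rpow_le_rpow (ediam_thickening_le e) hs).trans he_rpow.le

lemma isOpen_setOf_exists_isFineOpenCover_slice {Y : Type*} [TopologicalSpace Y] [T2Space Y]
    {C : Set X} (hC : IsCompact C) {φ : X → Y} (hφ : ContinuousOn φ C) (s : ℝ) (η β : ℝ≥0∞) :
    IsOpen {t | ∃ u, IsFineOpenCover s (C ∩ φ ⁻¹' {t}) η β u} := by
  rw [isOpen_iff_mem_nhds]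
  rintro t ⟨u, hu⟩
  have hcompact : IsCompact (φ '' (C \ ⋃ i, u i)) :=
    (hC.diff (isOpen_iUnion hu.isOpen)).image_of_continuousOn (hφ.mono sdiff_subset)
  have ht : t ∈ (φ '' (C \ ⋃ i, u i))ᶜ := by
    rintro ⟨x, ⟨hxC, hxu⟩, hxt⟩
    exact hxu (hu.subset_iUnion ⟨hxC, hxt⟩)
  filter_upwards [hcompact.isClosed.isOpen_compl.mem_nhds ht] with t' ht'
  refine ⟨u, hu.isOpen, ?_, hu.ediam_le, hu.tsum_lt⟩
  rintro x ⟨hxC, hxt⟩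
  by_contra hxu
  exact ht' ⟨x, ⟨hxC, hxu⟩, hxt⟩

lemma volume_closure_image_mul_ediam_rpow_le {s : ℝ} (hs : 0 ≤ s) {K : NNReal} {φ : X → ℝ}
    (hφ : LipschitzWith K φ) (u : Set X) :
    ediam u ^ s * volume (closure (φ '' u)) ≤
      K * ⨆ _ : u.Nonempty, ediam u ^ (s + 1) := by
  rcases u.eq_empty_or_nonempty with rfl | hu
  · simp
  have volume_le : volume (closure (φ '' u)) ≤ K * ediam u := by
    refine (Real.volume_le_diam _).trans ?_
    rw [ediam_closure]
    exact hφ.ediam_image_le u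
  simp only [hu, iSup_pos]
  rw [ENNReal.rpow_add_of_nonneg _ _ hs zero_le_one, ENNReal.rpow_one, mul_left_comm]
  gcongr

variable [MeasurableSpace X] [BorelSpace X]

lemma exists_isFineOpenCover {s : ℝ} (hs : 0 ≤ s) {A : Set X} {η β : ℝ≥0∞} (hη : 0 < η)
    (hA : μH[s] A < β) : ∃ u, IsFineOpenCover s A η β u := by
  obtain ⟨η', hη'_pos, hη'_lt⟩ := exists_between hη
  rw [Measure.hausdorffMeasure_apply] at hA
  have premeasure_lt := (le_iSup₂ (f := fun (ρ : ℝ≥0∞) (_ : 0 < ρ) =>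
    ⨅ (t : ℕ → Set X) (_ : A ⊆ ⋃ n, t n) (_ : ∀ n, ediam (t n) ≤ ρ),
      ∑' n, ⨆ _ : (t n).Nonempty, ediam (t n) ^ s) η' hη'_pos).trans_lt hA
  simp only [iInf_lt_iff] at premeasure_lt
  obtain ⟨t, ht_cover, ht_diam, ht_sum⟩ := premeasure_lt
  obtain ⟨γ, hγ_pos, hγ_sum⟩ :=
    ENNReal.exists_pos_sum_of_countable' (tsub_pos_of_lt ht_sum).ne' ℕ
  choose u hu_open htu hu_diam hu_rpow using fun i =>
    exists_isOpen_superset_ediam_rpow_le hs ((ht_diam i).trans_lt hη'_lt) (hγ_pos i).ne'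
  refine ⟨u, hu_open, ht_cover.trans (iUnion_mono htu), hu_diam, ?_⟩
  calc ∑' i, (⨆ _ : (u i).Nonempty, ediam (u i) ^ s)
      ≤ ∑' i, ((⨆ _ : (t i).Nonempty, ediam (t i) ^ s) + γ i) := ENNReal.tsum_le_tsum hu_rpow
    _ = ∑' i, γ i + ∑' i, (⨆ _ : (t i).Nonempty, ediam (t i) ^ s) := by
        rw [ENNReal.tsum_add, add_comm]
    _ < β := lt_tsub_iff_right.mp hγ_sum

lemma hausdorffMeasure_le_iff_exists_isFineOpenCover {s : ℝ} (hs : 0 ≤ s) {A : Set X} {α : ℝ≥0∞}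
    (hα : α ≠ ⊤) :
    μH[s] A ≤ α ↔ ∀ n : ℕ, ∃ u, IsFineOpenCover s A (n : ℝ≥0∞)⁻¹ (α + (n : ℝ≥0∞)⁻¹) u := by
  have inv_pos (n : ℕ) : (0 : ℝ≥0∞) < (n : ℝ≥0∞)⁻¹ := by simp
  refine ⟨fun hA n => exists_isFineOpenCover hs (inv_pos n)
    (hA.trans_lt (ENNReal.lt_add_right hα (inv_pos n).ne')), fun hcover => ?_⟩
  choose u hu using hcover
  rw [Measure.hausdorffMeasure_apply]
  refine iSup₂_le fun ρ hρ => ?_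
  have tendsto_bound : Tendsto (fun n : ℕ => α + (n : ℝ≥0∞)⁻¹) atTop (𝓝 α) := by
    simpa using tendsto_const_nhds.add ENNReal.tendsto_inv_nat_nhds_zero
  refine ge_of_tendsto tendsto_bound ?_
  filter_upwards [ENNReal.tendsto_inv_nat_nhds_zero.eventually_lt_const hρ] with n hn
  exact (iInf₂_le_of_le (u n) (hu n).subset_iUnion
    (iInf_le _ fun i => ((hu n).ediam_le i).trans hn.le)).trans (hu n).tsum_lt.le

section Measurability

variable {Y : Type*} [TopologicalSpace Y] [T2Space Y] [MeasurableSpace Y] [OpensMeasurableSpace Y]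

lemma measurable_hausdorffMeasure_slice_of_isCompact {s : ℝ} (hs : 0 ≤ s) {C : Set X}
    (hC : IsCompact C) {φ : X → Y} (hφ : ContinuousOn φ C) :
    Measurable fun t => μH[s] (C ∩ φ ⁻¹' {t}) := by
  refine measurable_of_Iic fun α => ?_
  rcases eq_or_ne α ⊤ with rfl | hα
  · simp
  have preimage_Iic : (fun t => μH[s] (C ∩ φ ⁻¹' {t})) ⁻¹' Iic α =
      ⋂ n : ℕ, {t | ∃ u, IsFineOpenCover s (C ∩ φ ⁻¹' {t}) (n : ℝ≥0∞)⁻¹ (α + (n : ℝ≥0∞)⁻¹) u} := by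
    ext t
    simpa using hausdorffMeasure_le_iff_exists_isFineOpenCover hs hα
  rw [preimage_Iic]
  exact MeasurableSet.iInter fun n =>
    (isOpen_setOf_exists_isFineOpenCover_slice hC hφ s _ _).measurableSet

lemma measurable_hausdorffMeasure_slice {s : ℝ} (hs : 0 ≤ s) {A : Set X} (hA : IsSigmaCompact A)
    {φ : X → Y} (hφ : ContinuousOn φ A) : Measurable fun t => μH[s] (A ∩ φ ⁻¹' {t}) := by
  obtain ⟨K, hK, rfl⟩ := hA
  have measure_eq_iSup (t : Y) : μH[s] ((⋃ n, K n) ∩ φ ⁻¹' {t}) =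
      ⨆ n, μH[s] (accumulate K n ∩ φ ⁻¹' {t}) := by
    rw [← iUnion_accumulate, iUnion_inter, Monotone.measure_iUnion]
    exact fun m n hmn => inter_subset_inter_left _ (monotone_accumulate hmn)
  simp only [measure_eq_iSup]
  exact Measurable.iSup fun n => measurable_hausdorffMeasure_slice_of_isCompact hs
    (isCompact_accumulate hK n) (hφ.mono (accumulate_subset_iUnion n))

end Measurability

lemma hausdorffMeasure_slice_le_liminf {Y : Type*} [TopologicalSpace Y] (s : ℝ) {A : Set X}
    (φ : X → Y) {η : ℕ → ℝ≥0∞} (hη : Tendsto η atTop (𝓝 0)) {u : ℕ → ℕ → Set X}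
    (hcover : ∀ n, A ⊆ ⋃ i, u n i) (hdiam : ∀ n i, ediam (u n i) ≤ η n) (t : Y) :
    μH[s] (A ∩ φ ⁻¹' {t}) ≤
      liminf (fun n => ∑' i, (closure (φ '' u n i)).indicator (fun _ => ediam (u n i) ^ s) t)
        atTop := by
  let ι : ℕ → Type := fun n => {i : ℕ // t ∈ closure (φ '' u n i)}
  have hslice (n : ℕ) : A ∩ φ ⁻¹' {t} ⊆ ⋃ i : ι n, u n i.1 := by
    rintro x ⟨hxA, hxt⟩
    obtain ⟨i, hi⟩ := mem_iUnion.1 (hcover n hxA)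
    exact mem_iUnion.2 ⟨⟨i, subset_closure ⟨x, hi, hxt⟩⟩, hi⟩
  refine (Measure.hausdorffMeasure_le_liminf_tsum (ι := ι) s _ _ hη (fun n i => u n i.1)
    (.of_forall fun n i => hdiam n i.1) (.of_forall hslice)).trans_eq ?_
  congr 1 with n
  refine (tsum_subtype {i : ℕ | t ∈ closure (φ '' u n i)} fun i => ediam (u n i) ^ s).trans ?_
  exact tsum_congr fun i => by by_cases h : t ∈ closure (φ '' u n i) <;> simp [h]

/-- **Eilenberg's inequality** -/
theorem lintegral_hausdorffMeasure_slice_le {s : ℝ} (hs : 0 ≤ s) {A : Set X}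
    (hA : μH[s + 1] A ≠ ⊤) {K : NNReal} {φ : X → ℝ} (hφ : LipschitzWith K φ) :
    ∫⁻ t, μH[s] (A ∩ φ ⁻¹' {t}) ≤ K * μH[s + 1] A := by
  choose u hu using (hausdorffMeasure_le_iff_exists_isFineOpenCover (by positivity) hA).1 le_rfl
  let f : ℕ → ℕ → ℝ → ℝ≥0∞ := fun n i =>
    (closure (φ '' u n i)).indicator fun _ => ediam (u n i) ^ s
  have hf (n i : ℕ) : Measurable (f n i) :=
    measurable_const.indicator isClosed_closure.measurableSet
  have lintegral_le (n : ℕ) : ∫⁻ t, ∑' i, f n i t ≤ K * (μH[s + 1] A + (n : ℝ≥0∞)⁻¹) := by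
    rw [lintegral_tsum fun i => (hf n i).aemeasurable]
    refine le_trans ?_ (mul_le_mul_right (hu n).tsum_lt.le _)
    rw [← ENNReal.tsum_mul_left]
    refine ENNReal.tsum_le_tsum fun i => ?_
    rw [lintegral_indicator_const isClosed_closure.measurableSet]
    exact volume_closure_image_mul_ediam_rpow_le hs hφ (u n i)
  have tendsto_bound : Tendsto (fun n : ℕ => K * (μH[s + 1] A + (n : ℝ≥0∞)⁻¹)) atTop
      (𝓝 (K * μH[s + 1] A)) := by
    simpa using ENNReal.Tendsto.const_mul
      (tendsto_const_nhds.add ENNReal.tendsto_inv_nat_nhds_zero) (.inr ENNReal.coe_ne_top)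
  calc ∫⁻ t, μH[s] (A ∩ φ ⁻¹' {t})
      ≤ ∫⁻ t, liminf (fun n => ∑' i, f n i t) atTop :=
        lintegral_mono <| hausdorffMeasure_slice_le_liminf s φ ENNReal.tendsto_inv_nat_nhds_zero
          (fun n => (hu n).subset_iUnion) fun n => (hu n).ediam_le
    _ ≤ liminf (fun n => ∫⁻ t, ∑' i, f n i t) atTop :=
        lintegral_liminf_le fun n => Measurable.tsum (hf n)
    _ ≤ liminf (fun n : ℕ => K * (μH[s + 1] A + (n : ℝ≥0∞)⁻¹)) atTop :=
        liminf_le_liminf (.of_forall lintegral_le)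
    _ = K * μH[s + 1] A := tendsto_bound.liminf_eq

end HausdorffSlices

section ParallelSets

lemma countable_setOf_isLocalMax_value {X β : Type*} [TopologicalSpace X]
    [SecondCountableTopology X] [ConditionallyCompleteLattice β] (φ : X → β) :
    {t | ∃ z, φ z = t ∧ IsLocalMax φ z}.Countable := by
  refine ((TopologicalSpace.countable_countableBasis X).image fun b => sSup (φ '' b)).mono ?_
  rintro t ⟨z, rfl, hz⟩
  obtain ⟨b, hb, hzb, hb_le⟩ := (TopologicalSpace.isBasis_countableBasis X).mem_nhds_iff.1 hz
  refine ⟨b, hb, IsGreatest.csSup_eq ⟨mem_image_of_mem φ hzb, ?_⟩⟩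
  rintro _ ⟨y, hy, rfl⟩
  exact hb_le hy

variable {X : Type*} [PseudoMetricSpace X] {F : Set X}

lemma mem_cthickening_iff_infDist_le (hF : F.Nonempty) {ε : ℝ} (hε : 0 ≤ ε) {z : X} :
    z ∈ cthickening ε F ↔ infDist z F ≤ ε := by
  rw [mem_cthickening_iff, infDist, ENNReal.le_ofReal_iff_toReal_le (infEDist_ne_top hF) hε]

lemma infDist_eq_of_mem_frontier_cthickening {ε : ℝ} (hε : 0 ≤ ε) {z : X}
    (hz : z ∈ frontier (cthickening ε F)) : infDist z F = ε := by
  rw [infDist, frontier_cthickening_subset F hz, ENNReal.toReal_ofReal hε]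

lemma ae_frontier_cthickening_eq [SecondCountableTopology X] (hF : F.Nonempty) :
    ∀ᵐ ε : ℝ, 0 < ε → frontier (cthickening ε F) = (infDist · F) ⁻¹' {ε} := by
  filter_upwards [(countable_setOf_isLocalMax_value (infDist · F)).ae_notMem volume] with ε hε hpos
  refine subset_antisymm (fun z => infDist_eq_of_mem_frontier_cthickening hpos.le) fun z hz => ?_
  rw [mem_preimage, mem_singleton_iff] at hz
  rw [isClosed_cthickening.frontier_eq]
  refine ⟨(mem_cthickening_iff_infDist_le hF hpos.le).2 hz.le, fun hz_int => hε ⟨z, hz, ?_⟩⟩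
  filter_upwards [mem_interior_iff_mem_nhds.1 hz_int] with y hy
  rw [hz]
  exact (mem_cthickening_iff_infDist_le hF hpos.le).1 hy

end ParallelSets

section Similarities

/-- The map `f` is a similarity of ratio `r`. -/
def IsSimilarity {X Y : Type*} [PseudoMetricSpace X] [PseudoMetricSpace Y] (r : ℝ) (f : X → Y) :
    Prop :=
  ∀ x y, dist (f x) (f y) = r * dist x y

namespace IsSimilarity

section PseudoMetric

variable {X Y : Type*} [PseudoMetricSpace X] [PseudoMetricSpace Y] {r : ℝ} {f : X → Y}

lemma lipschitzWith (hf : IsSimilarity r f) : LipschitzWith r.toNNReal f :=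
  .of_dist_le_mul fun x y => (hf x y).le.trans <| by gcongr; exact r.le_coe_toNNReal

lemma antilipschitzWith (hr : 0 < r) (hf : IsSimilarity r f) :
    AntilipschitzWith r.toNNReal⁻¹ f :=
  .of_le_mul_dist fun x y => by
    rw [hf, NNReal.coe_inv, Real.coe_toNNReal r hr.le, inv_mul_cancel_left₀ hr.ne']

lemma infDist_image (hr : 0 < r) (hf : IsSimilarity r f) (x : X) (A : Set X) :
    infDist (f x) (f '' A) = r * infDist x A := by
  rcases A.eq_empty_or_nonempty with rfl | hA
  · simp
  refine le_antisymm ?_ ((le_infDist (hA.image f)).2 ?_)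
  · rw [← div_le_iff₀' hr]
    refine (le_infDist hA).2 fun y hy => ?_
    rw [div_le_iff₀' hr, ← hf]
    exact infDist_le_dist_of_mem (mem_image_of_mem f hy)
  · rintro _ ⟨y, hy, rfl⟩
    rw [hf]
    gcongr
    exact infDist_le_dist_of_mem hy

end PseudoMetric

lemma hausdorffMeasure_image {X Y : Type*} [MetricSpace X] [MeasurableSpace X] [BorelSpace X]
    [MetricSpace Y] [MeasurableSpace Y] [BorelSpace Y] {r : ℝ} {f : X → Y} (hr : 0 < r)
    (hf : IsSimilarity r f) {s : ℝ} (hs : 0 ≤ s) (A : Set X) :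
    μH[s] (f '' A) = ENNReal.ofReal (r ^ s) * μH[s] A := by
  have ratio_ne_zero : r.toNNReal ≠ 0 := by simpa using hr
  rw [← ENNReal.ofReal_rpow_of_pos hr]
  refine le_antisymm (hf.lipschitzWith.hausdorffMeasure_image_le hs A) ?_
  have image_ge := (hf.antilipschitzWith hr).le_hausdorffMeasure_image hs A
  rwa [ENNReal.coe_inv ratio_ne_zero, ENNReal.inv_rpow, ← ENNReal.mul_le_iff_le_inv
    (by simp [hr]) (ENNReal.rpow_ne_top_of_nonneg hs ENNReal.coe_ne_top)] at image_ge

variable {E : Type*} [NormedAddCommGroup E] [NormedSpace ℝ E] [StrictConvexSpace ℝ E]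
  [FiniteDimensional ℝ E] {r : ℝ} {f : E → E}

lemma surjective (hr : 0 < r) (hf : IsSimilarity r f) : Function.Surjective f := by
  have hiso : Isometry fun x => r⁻¹ • f x := .of_dist_eq fun x y => by
    rw [dist_smul₀, hf, Real.norm_of_nonneg (by positivity), inv_mul_cancel_left₀ hr.ne']
  let _ : Inhabited E := ⟨0⟩
  have hsurj := (hiso.affineIsometryOfStrictConvexSpace.toAffineIsometryEquiv rfl).surjective
  intro y
  obtain ⟨x, hx⟩ := hsurj (r⁻¹ • y)
  exact ⟨x, smul_right_injective E (inv_ne_zero hr.ne') hx⟩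

lemma isOpenMap (hr : 0 < r) (hf : IsSimilarity r f) : IsOpenMap f :=
  ((hf.antilipschitzWith hr).isClosedEmbedding hf.lipschitzWith.uniformContinuous
    |>.isEmbedding.toHomeomorphOfSurjective (hf.surjective hr)).isOpenMap

end IsSimilarity

end Similarities

section OpenSetCondition

open scoped Function

/-- The iterated function system `S` satisfies the open set condition with feasible open set `O`. -/
structure OpenSetCondition {X ι : Type*} [TopologicalSpace X] (S : ι → X → X) (O : Set X) :
    Prop where
  isOpen : IsOpen O
  image_subset : ∀ i, S i '' O ⊆ O
  pairwise_disjoint : Pairwise (Disjoint on fun i => S i '' O)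

/-- The part of the level set `{z | infDist z F = ε}` formed by the points that are closer to `F`
than to the complement of `O`. Since `infDist z ∅ = 0`, it is empty for `O = univ`. -/
def innerLevel {X : Type*} [PseudoMetricSpace X] (F O : Set X) (ε : ℝ) : Set X :=
  {z | infDist z F < infDist z Oᶜ} ∩ (infDist · F) ⁻¹' {ε}

lemma attractor_subset_of_image_subset {X ι : Type*} [PseudoMetricSpace X] {S : ι → X → X}
    {r : ι → ℝ} (hr : ∀ i, r i ∈ Ioo (0 : ℝ) 1) (hS : ∀ i, IsSimilarity (r i) (S i)) {F C : Set X}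
    (hF_cpt : IsCompact F) (hF_self : F = ⋃ i, S i '' F) (hC_closed : IsClosed C)
    (hC_ne : C.Nonempty) (hC : ∀ i, S i '' C ⊆ C) : F ⊆ C := by
  rcases F.eq_empty_or_nonempty with rfl | hF_ne
  · exact empty_subset C
  -- A point of `F` farthest from `C` is the image of a point at least `1 / r i` times as far.
  obtain ⟨x₀, hx₀, hmax⟩ := hF_cpt.exists_isMaxOn hF_ne (continuous_infDist_pt C).continuousOn
  obtain ⟨i, x, hx, hx_eq⟩ := mem_iUnion.1 (hF_self ▸ hx₀)
  have contract : infDist x₀ C ≤ r i * infDist x C := by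
    rw [← hx_eq, ← (hS i).infDist_image (hr i).1]
    exact infDist_le_infDist_of_subset (hC i) (hC_ne.image _)
  have max_nonpos : infDist x₀ C ≤ 0 := by
    have hle : infDist x C ≤ infDist x₀ C := hmax hx
    nlinarith [(hr i).1, (hr i).2]
  intro y hy
  rw [hC_closed.mem_iff_infDist_zero hC_ne]
  exact le_antisymm ((show infDist y C ≤ infDist x₀ C from hmax hy).trans max_nonpos)
    infDist_nonneg

namespace OpenSetCondition

lemma attractor_subset_closure {ι X : Type*} [PseudoMetricSpace X] {S : ι → X → X} {r : ι → ℝ}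
    {F O : Set X} (hO : OpenSetCondition S O) (hO_ne : O.Nonempty)
    (hr : ∀ i, r i ∈ Ioo (0 : ℝ) 1) (hS : ∀ i, IsSimilarity (r i) (S i)) (hF_cpt : IsCompact F)
    (hF_self : F = ⋃ i, S i '' F) : F ⊆ closure O :=
  attractor_subset_of_image_subset hr hS hF_cpt hF_self isClosed_closure hO_ne.closure fun i =>
    (image_closure_subset_closure_image (hS i).lipschitzWith.continuous).trans
      (closure_mono (hO.image_subset i))

variable {ι E : Type*} [NormedAddCommGroup E] [NormedSpace ℝ E] [StrictConvexSpace ℝ E]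
  [FiniteDimensional ℝ E] {S : ι → E → E} {r : ι → ℝ} {F O : Set E}

lemma interior_of_image_subset (hr : ∀ i, 0 < r i) (hS : ∀ i, IsSimilarity (r i) (S i)) {J : Set E}
    (hJ_sub : ∀ i, S i '' J ⊆ J)
    (hJ_disj : ∀ i j, i ≠ j → Disjoint (S i '' interior J) (S j '' interior J)) :
    OpenSetCondition S (interior J) where
  isOpen := isOpen_interior
  image_subset i := interior_maximal ((image_mono interior_subset).trans (hJ_sub i))
    ((hS i).isOpenMap (hr i) _ isOpen_interior)
  pairwise_disjoint i j hij := hJ_disj i j hij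

lemma mem_of_image_mem_attractor (hO : OpenSetCondition S O)
    (hr : ∀ i, r i ∈ Ioo (0 : ℝ) 1) (hS : ∀ i, IsSimilarity (r i) (S i)) (hF_cpt : IsCompact F)
    (hF_self : F = ⋃ i, S i '' F) {i : ι} {x : E} (hxO : x ∈ O) (hxF : S i x ∈ F) : x ∈ F := by
  obtain ⟨j, y, hy, hxy⟩ := mem_iUnion.1 (hF_self ▸ hxF)
  have image_mem_closure : S i x ∈ closure (S j '' O) := by
    rw [← hxy]
    refine image_closure_subset_closure_image (hS j).lipschitzWith.continuous ⟨y, ?_, rfl⟩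
    exact hO.attractor_subset_closure ⟨x, hxO⟩ hr hS hF_cpt hF_self hy
  obtain rfl : i = j := by
    by_contra hij
    have hdisj : Disjoint (S i '' O) (closure (S j '' O)) :=
      (hO.pairwise_disjoint hij).closure_right ((hS i).isOpenMap (hr i).1 O hO.isOpen)
    exact hdisj.le_bot ⟨mem_image_of_mem _ hxO, image_mem_closure⟩
  rwa [← ((hS i).antilipschitzWith (hr i).1).injective hxy]

lemma infDist_image_attractor (hO : OpenSetCondition S O)
    (hr : ∀ i, r i ∈ Ioo (0 : ℝ) 1) (hS : ∀ i, IsSimilarity (r i) (S i)) (hF_ne : F.Nonempty)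
    (hF_cpt : IsCompact F) (hF_self : F = ⋃ i, S i '' F) (i : ι) {z : E}
    (hz : infDist z F < infDist z Oᶜ) : infDist (S i z) F = r i * infDist z F := by
  apply le_antisymm
  · rw [← (hS i).infDist_image (hr i).1]
    refine infDist_le_infDist_of_subset ?_ (hF_ne.image _)
    exact (subset_iUnion (fun j => S j '' F) i).trans hF_self.symm.subset
  · refine (le_infDist hF_ne).2 fun y hy => ?_
    obtain ⟨x, rfl⟩ := (hS i).surjective (hr i).1 y
    rw [hS i]
    refine mul_le_mul_of_nonneg_left ?_ (hr i).1.le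
    by_contra! hlt
    have hxO : x ∈ O := ball_infDist_compl_subset (mem_ball'.2 (hlt.trans hz))
    exact hlt.not_ge
      (infDist_le_dist_of_mem (hO.mem_of_image_mem_attractor hr hS hF_cpt hF_self hxO hy))

lemma mul_infDist_compl_le_infDist_image_compl (hO : OpenSetCondition S O) {i : ι} (hr : 0 < r i)
    (hS : IsSimilarity (r i) (S i)) (z : E) : r i * infDist z Oᶜ ≤ infDist (S i z) Oᶜ := by
  rcases Oᶜ.eq_empty_or_nonempty with hO_compl | hO_compl
  · simp [hO_compl]
  rw [← hS.infDist_image hr]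
  refine infDist_le_infDist_of_subset (fun y hy => ?_) hO_compl
  obtain ⟨x, rfl⟩ := hS.surjective hr y
  exact ⟨x, fun hx => hy (hO.image_subset i ⟨x, hx, rfl⟩), rfl⟩

lemma image_innerLevel_subset (hO : OpenSetCondition S O)
    (hr : ∀ i, r i ∈ Ioo (0 : ℝ) 1) (hS : ∀ i, IsSimilarity (r i) (S i)) (hF_ne : F.Nonempty)
    (hF_cpt : IsCompact F) (hF_self : F = ⋃ i, S i '' F) (i : ι) (ε : ℝ) :
    S i '' innerLevel F O (ε / r i) ⊆ innerLevel F O ε ∩ S i '' O := by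
  rintro _ ⟨z, ⟨hz_inner, hz_level⟩, rfl⟩
  have dist_image := hO.infDist_image_attractor hr hS hF_ne hF_cpt hF_self i hz_inner
  refine ⟨⟨?_, ?_⟩, z, ?_, rfl⟩
  · calc infDist (S i z) F = r i * infDist z F := dist_image
      _ < r i * infDist z Oᶜ := mul_lt_mul_of_pos_left hz_inner (hr i).1
      _ ≤ infDist (S i z) Oᶜ := hO.mul_infDist_compl_le_infDist_image_compl (hr i).1 (hS i) z
  · rw [mem_preimage, mem_singleton_iff] at hz_level ⊢
    rw [dist_image, hz_level, mul_div_cancel₀ _ (hr i).1.ne']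
  · exact ball_infDist_compl_subset (mem_ball_self (infDist_nonneg.trans_lt hz_inner))

end OpenSetCondition

lemma isOpen_setOf_infDist_lt {X : Type*} [PseudoMetricSpace X] (A B : Set X) :
    IsOpen {z | infDist z A < infDist z B} :=
  isOpen_lt (continuous_infDist_pt A) (continuous_infDist_pt B)

lemma measurableSet_innerLevel {X : Type*} [PseudoMetricSpace X] [MeasurableSpace X]
    [OpensMeasurableSpace X] (F O : Set X) (ε : ℝ) : MeasurableSet (innerLevel F O ε) :=
  (isOpen_setOf_infDist_lt F Oᶜ).measurableSet.inter
    ((measurableSet_singleton ε).preimage (continuous_infDist_pt F).measurable)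

lemma measurable_hausdorffMeasure_innerLevel {X : Type*} [MetricSpace X] [ProperSpace X]
    [MeasurableSpace X] [BorelSpace X] {s : ℝ} (hs : 0 ≤ s) (F O : Set X) :
    Measurable fun ε => μH[s] (innerLevel F O ε) := by
  have hopen := isOpen_setOf_infDist_lt F Oᶜ
  have := hopen.locallyCompactSpace
  exact measurable_hausdorffMeasure_slice hs
    (isSigmaCompact_iff_sigmaCompactSpace.2 inferInstance) (continuous_infDist_pt F).continuousOn

lemma OpenSetCondition.sum_hausdorffMeasure_innerLevel_le {ι E : Type*} [Fintype ι]
    [NormedAddCommGroup E] [NormedSpace ℝ E] [StrictConvexSpace ℝ E] [FiniteDimensional ℝ E]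
    [MeasurableSpace E] [BorelSpace E] {S : ι → E → E} {r : ι → ℝ} {F O : Set E}
    (hO : OpenSetCondition S O) (hr : ∀ i, r i ∈ Ioo (0 : ℝ) 1)
    (hS : ∀ i, IsSimilarity (r i) (S i)) (hF_ne : F.Nonempty) (hF_cpt : IsCompact F)
    (hF_self : F = ⋃ i, S i '' F) {s : ℝ} (hs : 0 ≤ s) (ε : ℝ) :
    ∑ i, ENNReal.ofReal (r i ^ s) * μH[s] (innerLevel F O (ε / r i)) ≤
      μH[s] (innerLevel F O ε) :=
  calc ∑ i, ENNReal.ofReal (r i ^ s) * μH[s] (innerLevel F O (ε / r i))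
      = ∑ i, μH[s] (S i '' innerLevel F O (ε / r i)) :=
        Finset.sum_congr rfl fun i _ => ((hS i).hausdorffMeasure_image (hr i).1 hs _).symm
    _ ≤ ∑ i, μH[s] (innerLevel F O ε ∩ S i '' O) := Finset.sum_le_sum fun i _ =>
        measure_mono (hO.image_innerLevel_subset hr hS hF_ne hF_cpt hF_self i ε)
    _ = μH[s] (⋃ i, innerLevel F O ε ∩ S i '' O) := by
        rw [measure_iUnion, tsum_fintype]
        · exact fun i j hij =>
            (hO.pairwise_disjoint hij).mono inter_subset_right inter_subset_right
        · exact fun i => (measurableSet_innerLevel F O ε).inter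
            ((hS i).isOpenMap (hr i).1 O hO.isOpen).measurableSet
    _ ≤ μH[s] (innerLevel F O ε) := measure_mono (iUnion_subset fun i => inter_subset_left)

end OpenSetCondition

section LogIntegral

/-- The integral of `G` over `(δ, b]` against the scale-invariant measure `dε / ε`. -/
noncomputable def logIntegral (G : ℝ → ℝ≥0∞) (δ b : ℝ) : ℝ≥0∞ :=
  ∫⁻ ε in Ioc δ b, G ε * ENNReal.ofReal ε⁻¹

lemma logIntegral_mono {G H : ℝ → ℝ≥0∞} (hGH : G ≤ H) {δ δ' b b' : ℝ} (hδ : δ' ≤ δ)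
    (hb : b ≤ b') : logIntegral G δ b ≤ logIntegral H δ' b' :=
  lintegral_mono' (Measure.restrict_mono (Ioc_subset_Ioc hδ hb) le_rfl)
    fun ε => mul_le_mul_left (hGH ε) _

lemma logIntegral_add (G : ℝ → ℝ≥0∞) {δ a b : ℝ} (hδ : δ ≤ a) (hab : a ≤ b) :
    logIntegral G δ a + logIntegral G a b = logIntegral G δ b := by
  rw [logIntegral, logIntegral, logIntegral, ← Ioc_union_Ioc_eq_Ioc hδ hab,
    lintegral_union measurableSet_Ioc (Ioc_disjoint_Ioc_of_le le_rfl)]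

lemma logIntegral_comp_div (G : ℝ → ℝ≥0∞) {r : ℝ} (hr : 0 < r) (δ b : ℝ) :
    logIntegral (fun ε => G (ε / r)) δ b = logIntegral G (δ / r) (b / r) := by
  have image_eq : (fun ε => ε / r) '' Ioc δ b = Ioc (δ / r) (b / r) := by
    simpa using (OrderIso.divRight₀ r hr).image_Ioc δ b
  rw [logIntegral, logIntegral, ← image_eq,
    lintegral_image_eq_lintegral_abs_deriv_mul measurableSet_Ioc
      (fun ε _ => ((hasDerivAt_id' ε).div_const r).hasDerivWithinAt)
      (fun _ _ _ _ h => (div_left_inj' hr.ne').1 h)]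
  refine lintegral_congr fun ε => ?_
  rw [mul_left_comm, ← ENNReal.ofReal_mul (abs_nonneg _), one_div, abs_of_pos (inv_pos.2 hr),
    inv_div, div_eq_mul_inv r, inv_mul_cancel_left₀ hr.ne']

lemma ae_eq_zero_of_logIntegral_eq_zero {G : ℝ → ℝ≥0∞} (hG : Measurable G) {a b : ℝ} (ha : 0 ≤ a)
    (h : logIntegral G a b = 0) : ∀ᵐ ε ∂volume.restrict (Ioc a b), G ε = 0 := by
  rw [logIntegral, lintegral_eq_zero_iff (by fun_prop)] at h
  filter_upwards [h, ae_restrict_mem measurableSet_Ioc] with ε hε hmem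
  exact (mul_eq_zero.1 hε).resolve_right
    (ENNReal.ofReal_pos.2 (inv_pos.2 (ha.trans_lt hmem.1))).ne'

lemma Ioc_subset_iUnion_Ioc_mul_pow {p b : ℝ} (hp : p ∈ Ioo (0 : ℝ) 1) :
    Ioc 0 b ⊆ ⋃ m : ℕ, Ioc (b * p ^ (m + 1)) (b * p ^ m) := by
  intro x hx
  have hb : 0 < b := hx.1.trans_le hx.2
  obtain ⟨m, hm_lt, hm_le⟩ := exists_nat_pow_near_of_lt_one (div_pos hx.1 hb)
    ((div_le_one hb).2 hx.2) hp.1 hp.2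
  exact mem_iUnion.2 ⟨m, (lt_div_iff₀' hb).1 hm_lt, (div_le_iff₀' hb).1 hm_le⟩

lemma eventually_log_inv_nonneg : ∀ᶠ δ : ℝ in 𝓝[>] 0, 0 ≤ Real.log δ⁻¹ :=
  (Real.tendsto_log_atTop.comp tendsto_inv_nhdsGT_zero).eventually_ge_atTop 0

lemma tendsto_log_inv_mul_zero_of_le {f g : ℝ → ℝ} (hf : ∀ δ, 0 < δ → 0 ≤ f δ)
    (hfg : ∀ δ, 0 < δ → f δ ≤ g δ)
    (hg : Tendsto (fun δ => (Real.log δ⁻¹)⁻¹ * g δ) (𝓝[>] 0) (𝓝 0)) :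
    Tendsto (fun δ => (Real.log δ⁻¹)⁻¹ * f δ) (𝓝[>] 0) (𝓝 0) := by
  refine tendsto_of_tendsto_of_tendsto_of_le_of_le' tendsto_const_nhds hg ?_ ?_
  · filter_upwards [eventually_log_inv_nonneg, self_mem_nhdsWithin] with δ hlog hδ
    exact mul_nonneg (inv_nonneg.2 hlog) (hf δ hδ)
  · filter_upwards [eventually_log_inv_nonneg, self_mem_nhdsWithin] with δ hlog hδ
    exact mul_le_mul_of_nonneg_left (hfg δ hδ) (inv_nonneg.2 hlog)

lemma nonpos_of_nat_mul_le_of_tendsto_log_inv_mul {f : ℝ → ℝ} {c a q : ℝ} (ha : 0 < a)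
    (hq : q ∈ Ioo (0 : ℝ) 1) (hf : ∀ n : ℕ, n * c ≤ f (a * q ^ n))
    (hlim : Tendsto (fun δ => (Real.log δ⁻¹)⁻¹ * f δ) (𝓝[>] 0) (𝓝 0)) : c ≤ 0 := by
  have log_pos : 0 < Real.log q⁻¹ := Real.log_pos (one_lt_inv_iff₀.2 hq)
  have log_eq (n : ℕ) : Real.log (a * q ^ n)⁻¹ = Real.log a⁻¹ + Real.log q⁻¹ * n := by
    rw [mul_inv, Real.log_mul (inv_pos.2 ha).ne' (inv_pos.2 (pow_pos hq.1 n)).ne', ← inv_pow,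
      Real.log_pow, mul_comm (n : ℝ)]
  have scale_tendsto : Tendsto (fun n : ℕ => a * q ^ n) atTop (𝓝[>] 0) := by
    refine tendsto_nhdsWithin_iff.2 ⟨?_, .of_forall fun n => mul_pos ha (pow_pos hq.1 n)⟩
    simpa using (tendsto_pow_atTop_nhds_zero_of_lt_one hq.1.le hq.2).const_mul a
  have ratio_tendsto : Tendsto (fun n : ℕ => (Real.log (a * q ^ n)⁻¹)⁻¹ * (n * c)) atTop
      (𝓝 (c / Real.log q⁻¹)) := by
    convert tendsto_add_mul_div_add_mul_atTop_nhds 0 (Real.log a⁻¹) c log_pos.ne' using 2 with n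
    rw [log_eq, zero_add, div_eq_inv_mul, mul_comm c]
  have ratio_le : c / Real.log q⁻¹ ≤ 0 :=
    le_of_tendsto_of_tendsto ratio_tendsto (hlim.comp scale_tendsto) <| by
      filter_upwards [scale_tendsto.eventually eventually_log_inv_nonneg] with n hn
      exact mul_le_mul_of_nonneg_left (hf n) (inv_nonneg.2 hn)
  simpa using (div_le_iff₀ log_pos).1 ratio_le

section Renewal

variable {ι : Type*} [Fintype ι] {r : ι → ℝ} {w : ι → ℝ≥0∞} {G : ℝ → ℝ≥0∞}

lemma logIntegral_add_logIntegral_div_le (hr : ∀ i, 0 < r i) (hw : 1 ≤ ∑ i, w i)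
    (hG : Measurable G) (hG_renewal : ∀ ε, 0 < ε → ∑ i, w i * G (ε / r i) ≤ G ε)
    {q δ a b : ℝ} (hq : 0 < q) (hqr : ∀ i, q ≤ r i) (hδ : 0 < δ) (hδa : δ ≤ a) (hab : a ≤ b)
    (hb : ∀ i, b ≤ a / r i) :
    logIntegral G (δ / q) b + logIntegral G a b ≤ logIntegral G δ b := by
  rw [← logIntegral_add G hδa hab]
  gcongr ?_ + _
  calc logIntegral G (δ / q) b
      ≤ (∑ i, w i) * logIntegral G (δ / q) b := le_mul_of_one_le_left' hw
    _ ≤ ∑ i, w i * logIntegral G (δ / r i) (a / r i) := by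
        rw [Finset.sum_mul]
        gcongr with i
        exact logIntegral_mono le_rfl (div_le_div_of_nonneg_left hδ.le hq (hqr i)) (hb i)
    _ = ∫⁻ ε in Ioc δ a, (∑ i, w i * G (ε / r i)) * ENNReal.ofReal ε⁻¹ := by
        simp_rw [Finset.sum_mul, mul_assoc]
        rw [lintegral_finsetSum _ fun i _ => by fun_prop]
        refine Finset.sum_congr rfl fun i _ => ?_
        rw [lintegral_const_mul _ (by fun_prop), ← logIntegral_comp_div G (hr i), logIntegral]
    _ ≤ logIntegral G δ a := setLIntegral_mono (by fun_prop) fun ε hε =>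
        mul_le_mul_left (hG_renewal ε (hδ.trans hε.1)) _

lemma nat_mul_logIntegral_le (hr : ∀ i, 0 < r i) (hw : 1 ≤ ∑ i, w i)
    (hG : Measurable G) (hG_renewal : ∀ ε, 0 < ε → ∑ i, w i * G (ε / r i) ≤ G ε)
    {q a b : ℝ} (hq : q ∈ Ioc (0 : ℝ) 1) (hqr : ∀ i, q ≤ r i) (ha : 0 < a) (hab : a ≤ b)
    (hb : ∀ i, b ≤ a / r i) (n : ℕ) :
    n * logIntegral G a b ≤ logIntegral G (a * q ^ n) b := by
  induction n with
  | zero => simp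
  | succ n ih =>
    have hpos : 0 < a * q ^ (n + 1) := mul_pos ha (pow_pos hq.1 _)
    have hle : a * q ^ (n + 1) ≤ a := mul_le_of_le_one_right ha.le (pow_le_one₀ hq.1.le hq.2)
    calc ((n + 1 : ℕ) : ℝ≥0∞) * logIntegral G a b
        = n * logIntegral G a b + logIntegral G a b := by push_cast; ring
      _ ≤ logIntegral G (a * q ^ (n + 1) / q) b + logIntegral G a b := by
          rw [pow_succ, ← mul_assoc, mul_div_cancel_right₀ _ hq.1.ne']
          gcongr
      _ ≤ logIntegral G (a * q ^ (n + 1)) b := logIntegral_add_logIntegral_div_le hr hw hG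
          hG_renewal hq.1 hqr hpos hle hab hb

lemma logIntegral_eq_zero_of_renewal (hr : ∀ i, r i ∈ Ioo (0 : ℝ) 1) (hw : 1 ≤ ∑ i, w i)
    (hG : Measurable G) (hG_renewal : ∀ ε, 0 < ε → ∑ i, w i * G (ε / r i) ≤ G ε) {ε₀ : ℝ}
    (hG_fin : ∀ δ, 0 < δ → logIntegral G δ ε₀ ≠ ⊤)
    (hlim : Tendsto (fun δ => (Real.log δ⁻¹)⁻¹ * (logIntegral G δ ε₀).toReal) (𝓝[>] 0) (𝓝 0))
    {a b : ℝ} (ha : 0 < a) (hab : a ≤ b) (hbε₀ : b ≤ ε₀) (hb : ∀ i, b ≤ a / r i) :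
    logIntegral G a b = 0 := by
  rcases isEmpty_or_nonempty ι with h_empty | h_nonempty
  · simp at hw
  obtain ⟨j, hj⟩ := Finite.exists_min r
  have nat_mul_le (n : ℕ) : n * logIntegral G a b ≤ logIntegral G (a * r j ^ n) ε₀ :=
    (nat_mul_logIntegral_le (fun i => (hr i).1) hw hG hG_renewal (Ioo_subset_Ioc_self (hr j)) hj
      ha hab hb n).trans (logIntegral_mono le_rfl le_rfl hbε₀)
  have toReal_nonpos : (logIntegral G a b).toReal ≤ 0 := by
    refine nonpos_of_nat_mul_le_of_tendsto_log_inv_mul ha (hr j) (fun n => ?_) hlim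
    rw [← ENNReal.toReal_natCast, ← ENNReal.toReal_mul]
    exact ENNReal.toReal_mono (hG_fin _ (mul_pos ha (pow_pos (hr j).1 n))) (nat_mul_le n)
  have ne_top : logIntegral G a b ≠ ⊤ :=
    ne_top_of_le_ne_top (hG_fin a ha) (logIntegral_mono le_rfl le_rfl hbε₀)
  rwa [← nonpos_iff_eq_zero, ← ENNReal.toReal_le_toReal ne_top ENNReal.zero_ne_top]

theorem ae_eq_zero_of_renewal (hr : ∀ i, r i ∈ Ioo (0 : ℝ) 1) (hw : 1 ≤ ∑ i, w i)
    (hG : Measurable G) (hG_renewal : ∀ ε, 0 < ε → ∑ i, w i * G (ε / r i) ≤ G ε) {ε₀ : ℝ}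
    (hG_fin : ∀ δ, 0 < δ → logIntegral G δ ε₀ ≠ ⊤)
    (hlim : Tendsto (fun δ => (Real.log δ⁻¹)⁻¹ * (logIntegral G δ ε₀).toReal) (𝓝[>] 0) (𝓝 0)) :
    ∀ᵐ ε ∂volume.restrict (Ioc 0 ε₀), G ε = 0 := by
  rcases le_or_gt ε₀ 0 with hε₀_le | hε₀
  · simp [Ioc_eq_empty hε₀_le.not_gt]
  rcases isEmpty_or_nonempty ι with h_empty | h_nonempty
  · simp at hw
  obtain ⟨j, hj⟩ := Finite.exists_max r
  have ⟨hj_pos, hj_lt⟩ := hr j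
  refine ae_restrict_of_ae_restrict_of_subset (Ioc_subset_iUnion_Ioc_mul_pow (hr j))
    ((ae_restrict_iUnion_iff _ _).2 fun m => ?_)
  have ha : 0 < ε₀ * r j ^ (m + 1) := by positivity
  refine ae_eq_zero_of_logIntegral_eq_zero hG ha.le
    (logIntegral_eq_zero_of_renewal hr hw hG hG_renewal hG_fin hlim ha ?_ ?_ fun i => ?_)
  · exact mul_le_mul_of_nonneg_left (pow_le_pow_of_le_one hj_pos.le hj_lt.le m.le_succ) hε₀.le
  · exact mul_le_of_le_one_right hε₀.le (pow_le_one₀ hj_pos.le hj_lt.le)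
  · rw [le_div_iff₀ (hr i).1, pow_succ, ← mul_assoc]
    exact mul_le_mul_of_nonneg_left (hj i) (by positivity)

end Renewal

end LogIntegral

section SurfaceIntegral

lemma measurable_hausdorffMeasure_infDist_preimage {X : Type*} [MetricSpace X] [ProperSpace X]
    [MeasurableSpace X] [BorelSpace X] {s : ℝ} (hs : 0 ≤ s) (F : Set X) :
    Measurable fun ε => μH[s] ((infDist · F) ⁻¹' {ε}) := by
  simpa using measurable_hausdorffMeasure_slice hs isSigmaCompact_univ
    (continuous_infDist_pt F).continuousOn

lemma logIntegral_rpow_mul_ne_top {h : ℝ → ℝ≥0∞} {t δ b : ℝ} (hδ : 0 < δ)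
    (hh : ∫⁻ ε in Ioc δ b, h ε ≠ ⊤) :
    logIntegral (fun ε => ENNReal.ofReal (ε ^ t) * h ε) δ b ≠ ⊤ := by
  have weight_continuousOn : ContinuousOn (fun ε : ℝ => ε ^ t * ε⁻¹) (Icc δ b) := fun ε hε =>
    have hε0 : ε ≠ 0 := (hδ.trans_le hε.1).ne'
    ((Real.continuousAt_rpow_const ε t (.inl hε0)).mul
      (continuousAt_inv₀ hε0)).continuousWithinAt
  obtain ⟨M, hM⟩ := isCompact_Icc.exists_bound_of_continuousOn weight_continuousOn
  refine ne_top_of_le_ne_top (ENNReal.mul_ne_top (ENNReal.ofReal_ne_top (r := M)) hh) ?_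
  rw [logIntegral, ← lintegral_const_mul' _ _ ENNReal.ofReal_ne_top]
  refine setLIntegral_mono' measurableSet_Ioc fun ε hε => ?_
  rw [mul_right_comm, ← ENNReal.ofReal_mul (Real.rpow_nonneg (hδ.trans hε.1).le t)]
  gcongr
  exact (le_abs_self _).trans (hM ε (Ioc_subset_Icc_self hε))

lemma toReal_logIntegral {G : ℝ → ℝ≥0∞} (hG : Measurable G) {δ b : ℝ} (hδ : 0 ≤ δ)
    (hG_fin : logIntegral G δ b ≠ ⊤) :
    (logIntegral G δ b).toReal = ∫ ε in Ioc δ b, (G ε).toReal * ε⁻¹ := by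
  have hm : Measurable fun ε => G ε * ENNReal.ofReal ε⁻¹ := by fun_prop
  rw [logIntegral, ← integral_toReal hm.aemeasurable (ae_lt_top hm hG_fin)]
  refine setIntegral_congr_fun measurableSet_Ioc fun ε hε => ?_
  simp only [ENNReal.toReal_mul, ENNReal.toReal_ofReal (inv_pos.2 (hδ.trans_lt hε.1)).le]

variable {E : Type*} [NormedAddCommGroup E] [NormedSpace ℝ E] [FiniteDimensional ℝ E]
  [MeasurableSpace E] [BorelSpace E] {F : Set E}

open Module (finrank)

lemma finrank_sub_one_nonneg (V : Type*) [AddCommGroup V] [Module ℝ V]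
    [FiniteDimensional ℝ V] [Nontrivial V] : (0 : ℝ) ≤ finrank ℝ V - 1 := by
  rw [sub_nonneg, Nat.one_le_cast]
  exact Module.finrank_pos

lemma setLIntegral_hausdorffMeasure_infDist_preimage_ne_top [Nontrivial E] (hF_ne : F.Nonempty)
    (hF_cpt : IsCompact F) {δ b : ℝ} (hδ : 0 ≤ δ) :
    ∫⁻ ε in Ioc δ b, μH[(finrank ℝ E : ℝ) - 1] ((infDist · F) ⁻¹' {ε}) ≠ ⊤ := by
  have volume_fin : μH[(finrank ℝ E : ℝ) - 1 + 1] (cthickening b F) ≠ ⊤ := by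
    rw [sub_add_cancel]
    exact hF_cpt.cthickening.measure_ne_top
  have eilenberg := lintegral_hausdorffMeasure_slice_le (finrank_sub_one_nonneg E) volume_fin
    (lipschitz_infDist_pt F)
  refine ne_top_of_le_ne_top (ENNReal.mul_ne_top ENNReal.coe_ne_top volume_fin)
    (le_trans ?_ eilenberg)
  refine (setLIntegral_mono' measurableSet_Ioc fun ε hε => measure_mono ?_).trans
    (setLIntegral_le_lintegral _ _)
  refine subset_inter (fun z hz => ?_) subset_rfl
  exact (mem_cthickening_iff_infDist_le hF_ne (hδ.trans (hε.1.le.trans hε.2))).2 (hz.trans_le hε.2)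

lemma logIntegral_infDist_preimage_ne_top [Nontrivial E] (hF_ne : F.Nonempty)
    (hF_cpt : IsCompact F) (t : ℝ) {δ b : ℝ} (hδ : 0 < δ) :
    logIntegral (fun ε => ENNReal.ofReal (ε ^ t) *
      μH[(finrank ℝ E : ℝ) - 1] ((infDist · F) ⁻¹' {ε})) δ b ≠ ⊤ :=
  logIntegral_rpow_mul_ne_top hδ
    (setLIntegral_hausdorffMeasure_infDist_preimage_ne_top hF_ne hF_cpt hδ.le)

lemma toReal_logIntegral_infDist_preimage [Nontrivial E] (hF_ne : F.Nonempty)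
    (hF_cpt : IsCompact F) (t : ℝ) {δ b : ℝ} (hδ : 0 < δ) :
    (logIntegral (fun ε => ENNReal.ofReal (ε ^ t) *
      μH[(finrank ℝ E : ℝ) - 1] ((infDist · F) ⁻¹' {ε})) δ b).toReal =
    ∫ ε in Ioc δ b,
      ε ^ t * (μH[(finrank ℝ E : ℝ) - 1] (frontier (cthickening ε F))).toReal * ε⁻¹ := by
  have hm := measurable_hausdorffMeasure_infDist_preimage (finrank_sub_one_nonneg E) F
  rw [toReal_logIntegral (by fun_prop) hδ.le
    (logIntegral_infDist_preimage_ne_top hF_ne hF_cpt t hδ)]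
  refine setIntegral_congr_ae measurableSet_Ioc ?_
  filter_upwards [ae_frontier_cthickening_eq hF_ne] with ε frontier_eq hε
  have hpos : 0 < ε := hδ.trans hε.1
  rw [frontier_eq hpos, ENNReal.toReal_mul, ENNReal.toReal_ofReal (Real.rpow_nonneg hpos.le t)]

end SurfaceIntegral

section Concentration

open Module (finrank)

variable {ι E : Type*} [Fintype ι] [NormedAddCommGroup E] [NormedSpace ℝ E]
  [StrictConvexSpace ℝ E] [FiniteDimensional ℝ E] [MeasurableSpace E] [BorelSpace E]
  {S : ι → E → E} {r : ι → ℝ} {F O : Set E}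

lemma OpenSetCondition.sum_rpow_mul_hausdorffMeasure_innerLevel_le (hO : OpenSetCondition S O)
    (hr : ∀ i, r i ∈ Ioo (0 : ℝ) 1) (hS : ∀ i, IsSimilarity (r i) (S i)) (hF_ne : F.Nonempty)
    (hF_cpt : IsCompact F) (hF_self : F = ⋃ i, S i '' F) {s : ℝ} (hs : 0 ≤ s) (t : ℝ) {ε : ℝ}
    (hε : 0 ≤ ε) :
    ∑ i, ENNReal.ofReal (r i ^ (t + s)) *
        (ENNReal.ofReal ((ε / r i) ^ t) * μH[s] (innerLevel F O (ε / r i))) ≤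
      ENNReal.ofReal (ε ^ t) * μH[s] (innerLevel F O ε) := by
  have weight_eq (i : ι) : ENNReal.ofReal (r i ^ (t + s)) * ENNReal.ofReal ((ε / r i) ^ t) =
      ENNReal.ofReal (ε ^ t) * ENNReal.ofReal (r i ^ s) := by
    have hri := (hr i).1
    rw [← ENNReal.ofReal_mul (by positivity), ← ENNReal.ofReal_mul (by positivity),
      Real.rpow_add hri, Real.div_rpow hε hri.le]
    field_simp
  simp_rw [← mul_assoc, weight_eq, mul_assoc, ← Finset.mul_sum]
  gcongr
  exact hO.sum_hausdorffMeasure_innerLevel_le hr hS hF_ne hF_cpt hF_self hs ε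

theorem OpenSetCondition.ae_hausdorffMeasure_innerLevel_eq_zero [Nontrivial E]
    (hO : OpenSetCondition S O) (hr : ∀ i, r i ∈ Ioo (0 : ℝ) 1)
    (hS : ∀ i, IsSimilarity (r i) (S i)) (hF_ne : F.Nonempty) (hF_cpt : IsCompact F)
    (hF_self : F = ⋃ i, S i '' F) {D : ℝ} (hD_dim : ∑ i, r i ^ D = 1) {ε₀ : ℝ}
    (hlim : Tendsto (fun δ : ℝ => (Real.log δ⁻¹)⁻¹ * ∫ ε in Ioc δ ε₀, ε ^ (D - finrank ℝ E + 1) *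
        (μH[(finrank ℝ E : ℝ) - 1] (frontier (cthickening ε F))).toReal * ε⁻¹)
      (𝓝[>] 0) (𝓝 0)) :
    ∀ᵐ ε ∂volume.restrict (Ioc 0 ε₀), μH[(finrank ℝ E : ℝ) - 1] (innerLevel F O ε) = 0 := by
  set s : ℝ := finrank ℝ E - 1
  set t : ℝ := D - finrank ℝ E + 1
  have hs : 0 ≤ s := finrank_sub_one_nonneg E
  let w (i : ι) : ℝ≥0∞ := ENNReal.ofReal (r i ^ (t + s))
  have weights_sum : 1 ≤ ∑ i, w i := by
    rw [← ENNReal.ofReal_sum_of_nonneg fun i _ => Real.rpow_nonneg (hr i).1.le _,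
      show t + s = D by simp only [s, t]; ring, hD_dim, ENNReal.ofReal_one]
  let inner (ε : ℝ) : ℝ≥0∞ := ENNReal.ofReal (ε ^ t) * μH[s] (innerLevel F O ε)
  let full (ε : ℝ) : ℝ≥0∞ := ENNReal.ofReal (ε ^ t) * μH[s] ((infDist · F) ⁻¹' {ε})
  have measurable_inner : Measurable inner :=
    .mul (by fun_prop) (measurable_hausdorffMeasure_innerLevel hs F O)
  have inner_renewal (ε : ℝ) (hε : 0 < ε) : ∑ i, w i * inner (ε / r i) ≤ inner ε :=
    hO.sum_rpow_mul_hausdorffMeasure_innerLevel_le hr hS hF_ne hF_cpt hF_self hs t hε.le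
  have inner_le (δ : ℝ) : logIntegral inner δ ε₀ ≤ logIntegral full δ ε₀ :=
    logIntegral_mono (fun ε => mul_le_mul_right (measure_mono inter_subset_right) _) le_rfl le_rfl
  have full_ne_top (δ : ℝ) (hδ : 0 < δ) : logIntegral full δ ε₀ ≠ ⊤ :=
    logIntegral_infDist_preimage_ne_top hF_ne hF_cpt t hδ
  have inner_ae_zero : ∀ᵐ ε ∂volume.restrict (Ioc 0 ε₀), inner ε = 0 := by
    refine ae_eq_zero_of_renewal hr weights_sum measurable_inner inner_renewal
      (fun δ hδ => ne_top_of_le_ne_top (full_ne_top δ hδ) (inner_le δ)) ?_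
    refine tendsto_log_inv_mul_zero_of_le (fun _ _ => ENNReal.toReal_nonneg) (fun δ hδ => ?_) hlim
    rw [← toReal_logIntegral_infDist_preimage hF_ne hF_cpt t hδ]
    exact ENNReal.toReal_mono (full_ne_top δ hδ) (inner_le δ)
  filter_upwards [inner_ae_zero, ae_restrict_mem measurableSet_Ioc] with ε hzero hε
  exact (mul_eq_zero.1 hzero).resolve_left (ENNReal.ofReal_pos.2 (Real.rpow_pos_of_pos hε.1 t)).ne'

theorem statement7_general [Nontrivial E] {d : ℕ} (hd : finrank ℝ E = d)
    (hr : ∀ i, r i ∈ Ioo (0 : ℝ) 1) (hS : ∀ i, IsSimilarity (r i) (S i)) (hF_ne : F.Nonempty)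
    (hF_cpt : IsCompact F) (hF_self : F = ⋃ i, S i '' F) {D : ℝ} (hD_dim : ∑ i, r i ^ D = 1)
    {J : Set E} (hJ_sub : ∀ i, S i '' J ⊆ J)
    (hJ_disj : ∀ i j, i ≠ j → Disjoint (S i '' interior J) (S j '' interior J)) {ε₀ c : ℝ}
    (hc : 1 ≤ c)
    (hlim : Tendsto (fun δ : ℝ => (Real.log δ⁻¹)⁻¹ * ∫ ε in Ioc δ ε₀,
        ε ^ (D - d + 1) * (μH[(d : ℝ) - 1] (frontier (cthickening ε F))).toReal * ε⁻¹)
      (𝓝[>] 0) (𝓝 0)) :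
    ∀ᵐ ε ∂volume.restrict (Ioo 0 ε₀),
      μH[(d : ℝ) - 1] {z | z ∈ frontier (cthickening ε F) ∧ c * ε < infDist z Jᶜ} = 0 := by
  subst hd
  have hO : OpenSetCondition S (interior J) :=
    .interior_of_image_subset (fun i => (hr i).1) hS hJ_sub hJ_disj
  have inner_null := hO.ae_hausdorffMeasure_innerLevel_eq_zero hr hS hF_ne hF_cpt hF_self hD_dim
    hlim
  filter_upwards [ae_restrict_of_ae_restrict_of_subset Ioo_subset_Ioc_self inner_null,
    ae_restrict_mem measurableSet_Ioo] with ε hnull hε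
  refine measure_mono_null ?_ hnull
  rintro z ⟨hz_frontier, hz_far⟩
  have hz_level : infDist z F = ε := infDist_eq_of_mem_frontier_cthickening hε.1.le hz_frontier
  refine ⟨?_, hz_level⟩
  calc infDist z F = ε := hz_level
    _ ≤ c * ε := le_mul_of_one_le_left hε.1.le hc
    _ < infDist z Jᶜ := hz_far
    _ = infDist z (interior J)ᶜ := by rw [← closure_compl, infDist_closure]

end Concentration

lemma one_le_max_mul_rpow_neg_sub_rpow_neg {a b t : ℝ} (ha : a ∈ Ioc (0 : ℝ) 1) (hb : 1 ≤ b)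
    (ht : 0 ≤ t) (x : ℝ) : 1 ≤ max (4 * a ^ (-t)) x - b ^ (-t) := by
  have ha_rpow : 1 ≤ a ^ (-t) :=
    Real.one_le_rpow_of_pos_of_le_one_of_nonpos ha.1 ha.2 (neg_nonpos.2 ht)
  have hb_rpow : b ^ (-t) ≤ 1 := Real.rpow_le_one_of_one_le_of_nonpos hb (neg_nonpos.2 ht)
  linarith [le_max_left (4 * a ^ (-t)) x]

/-- (Concentration of surface measure near `∂J` in the degenerate
case.) Under the SOSC with respect to `J`, with Ahlfors regularity constants
`c_F ∈ (0,1]` and `C_F ≥ 1`, set `ε₀ := H^D(F)^{1/D}` and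
`c := max(4 c_F^{-1/D}, diam(J) · H^D(F)^{-1/D}) − C_F^{-1/D}`.  If the
logarithmically averaged rescaled surface contents tend to `0`, then for
Lebesgue-almost every `ε ∈ (0,ε₀)` the part of `∂F(ε)` at distance `> cε` from
`ℝ^d ∖ J` is `H^{d-1}`-null. -/
theorem statement7 (d N : ℕ) (hd : 1 ≤ d) (hN : 2 ≤ N)
    (S : Fin N → EuclideanSpace ℝ (Fin d) → EuclideanSpace ℝ (Fin d))
    (r : Fin N → ℝ) (hr : ∀ i, r i ∈ Set.Ioo (0 : ℝ) 1)
    (hS : ∀ i x y, dist (S i x) (S i y) = r i * dist x y)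
    (F : Set (EuclideanSpace ℝ (Fin d)))
    (hF_ne : F.Nonempty) (hF_cpt : IsCompact F)
    (hF_self : F = ⋃ i, S i '' F)
    (D : ℝ) (hD : 0 < D) (hD_dim : ∑ i, r i ^ D = 1)
    (J : Set (EuclideanSpace ℝ (Fin d))) (hJ_cpt : IsCompact J)
    (hJ_reg : J = closure (interior J))
    (hJ_sub : ∀ i, S i '' J ⊆ J)
    (hJ_disj : ∀ i j, i ≠ j → Disjoint (S i '' interior J) (S j '' interior J))
    (hSOSC : (F ∩ interior J).Nonempty)
    (c_F C_F : ℝ) (hc_F : c_F ∈ Set.Ioc (0 : ℝ) 1) (hC_F : 1 ≤ C_F)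
    (hreg : ∀ x ∈ F, ∀ ρ : ℝ, 0 < ρ → ρ ≤ Metric.diam F →
      ENNReal.ofReal (c_F * ρ ^ D) ≤ μH[D] (F ∩ Metric.closedBall x ρ) ∧
      μH[D] (F ∩ Metric.closedBall x ρ) ≤ ENNReal.ofReal (C_F * ρ ^ D))
    (ε₀ : ℝ) (hε₀ : ε₀ = (μH[D] F).toReal ^ (1 / D))
    (c : ℝ) (hc : c = max (4 * c_F ^ (-(1 / D)))
      (Metric.diam J * (μH[D] F).toReal ^ (-(1 / D))) - C_F ^ (-(1 / D)))
    (hlim : Tendsto (fun δ : ℝ => (Real.log δ⁻¹)⁻¹ *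
        ∫ ε in Set.Ioc δ ε₀,
          ε ^ (D - d + 1) * (μH[(d:ℝ) - 1] (frontier (Metric.cthickening ε F))).toReal
            * ε⁻¹)
      (𝓝[>] 0) (𝓝 0)) :
    ∀ᵐ ε ∂(volume.restrict (Set.Ioo (0 : ℝ) ε₀)),
      μH[(d:ℝ) - 1]
        {z : EuclideanSpace ℝ (Fin d) |
          z ∈ frontier (Metric.cthickening ε F) ∧ c * ε < Metric.infDist z Jᶜ} = 0 := by
  have : NeZero d := ⟨by lia⟩
  have hc_one : 1 ≤ c := hc ▸ one_le_max_mul_rpow_neg_sub_rpow_neg hc_F hC_F (by positivity) _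
  exact statement7_general finrank_euclideanSpace_fin hr hS hF_ne hF_cpt hF_self hD_dim hJ_sub
    hJ_disj hc_one hlim
end

section
/- Assume the open set condition: J ⊆ ℝ^d is compact with J = cl(int J), ⋃_{j=1}^N S_j(J) ⊆ J, and S_j(int J) ∩ S_l(int J) = ∅ for j ≠ l (so that F ⊆ J). Let w = w₁…w_n ∈ {1,…,N}^n be a finite word, S_w := S_{w₁}∘⋯∘S_{w_n}, F_w := S_w(F), J_w := S_w(J). Let a ≥ 1, x ∈ F_w, and ε > 0 with 2aε < d(x, ℝ^d ∖ J_w). Then F(ε) ∩ B(x, aε) = F_w(ε) ∩ B(x, aε), where F_w(ε) := {y ∈ ℝ^d : d(y, F_w) ≤ ε} is the closed ε-parallel set of F_w. -/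
open MeasureTheory Metric Filter Set
open scoped ENNReal Topology

/-!
Attractors lie in every nonempty closed forward-invariant set, so `F ⊆ J`. Under the open set
condition a piece `S_k(J)` with `k ≠ i` cannot meet the interior of `S_i(J)`; descending along the
word `w` letter by letter, every point of `F` in the interior of `J_w` therefore belongs to `F_w`.
A point of `F` within `ε` of the ball `B(x, ρ)` lies in `B(x, ρ + ε)`, so if that larger ball is
inside the interior of `J_w`, then `F` and `F_w` have the same `ε`-parallel set in `B(x, ρ)`.
-/

section Topology

variable {X Y : Type*} [TopologicalSpace X] [TopologicalSpace Y] {f g : X → Y} {s : Set X}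

lemma preimage_interior_image_subset_interior (hf : Continuous f) (hf_inj : f.Injective) :
    f ⁻¹' interior (f '' s) ⊆ interior s :=
  (preimage_interior_subset_interior_preimage hf).trans_eq
    (congrArg interior (hf_inj.preimage_image s))

lemma interior_image_subset_image_interior (hf : Continuous f) (hf_inj : f.Injective) :
    interior (f '' s) ⊆ f '' interior s := by
  intro y hy
  obtain ⟨x, -, rfl⟩ := interior_subset hy
  exact mem_image_of_mem f (preimage_interior_image_subset_interior hf hf_inj hy)

lemma disjoint_image_interior_image (hf : Continuous f) (hg : Continuous g)
    (hg_inj : g.Injective) (hs : s ⊆ closure (interior s))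
    (hfg : Disjoint (f '' interior s) (g '' interior s)) :
    Disjoint (f '' s) (interior (g '' s)) := by
  have h_open : Disjoint (f '' interior s) (interior (g '' s)) :=
    hfg.mono_right (interior_image_subset_image_interior hg hg_inj)
  exact (h_open.closure_left isOpen_interior).mono_left
    ((image_mono hs).trans (image_closure_subset_closure_image hf))

end Topology

section Metric

variable {X : Type*}

lemma infDist_map_le_mul_infDist {Y : Type*} [PseudoMetricSpace X] [PseudoMetricSpace Y]
    {f : X → Y} {K : NNReal} {s : Set X} {t : Set Y} (hf : LipschitzWith K f)
    (hs : s.Nonempty) (hst : MapsTo f s t) (x : X) :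
    infDist (f x) t ≤ K * infDist x s := by
  have : Nonempty s := hs.to_subtype
  rw [infDist_eq_iInf (x := x), Real.mul_iInf_of_nonneg K.coe_nonneg]
  exact le_ciInf fun y => (infDist_le_dist_of_mem (hst y.2)).trans (hf.dist_le_mul x y)

lemma subset_of_subset_iUnion_image [MetricSpace X] {ι : Type*} {S : ι → X → X} {K : ι → NNReal}
    {F J : Set X} (hS : ∀ i, ContractingWith (K i) (S i)) (hF : IsCompact F)
    (hF_sub : F ⊆ ⋃ i, S i '' F) (hJ : IsClosed J) (hJ_ne : J.Nonempty)
    (hJ_maps : ∀ i, MapsTo (S i) J J) : F ⊆ J := by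
  intro z hz
  obtain ⟨p, hp, hp_max⟩ :=
    hF.exists_isMaxOn ⟨z, hz⟩ (continuous_infDist_pt J).continuousOn
  obtain ⟨i, q, hq, rfl⟩ := mem_iUnion.1 (hF_sub hp)
  have h_contract : infDist (S i q) J ≤ K i * infDist (S i q) J :=
    (infDist_map_le_mul_infDist (hS i).2 hJ_ne (hJ_maps i) q).trans
      (mul_le_mul_of_nonneg_left (hp_max hq) (K i).2)
  have hK : (K i : ℝ) < 1 := (hS i).1
  have h_max_nonpos : infDist (S i q) J ≤ 0 := by nlinarith
  rw [hJ.mem_iff_infDist_zero hJ_ne]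
  exact le_antisymm ((hp_max hz).trans h_max_nonpos) infDist_nonneg

lemma cthickening_inter_closedBall_eq [PseudoMetricSpace X] {A F : Set X} {x : X} {ε ρ : ℝ}
    (hF : IsCompact F) (hε : 0 ≤ ε) (hAF : A ⊆ F) (hFA : F ∩ closedBall x (ρ + ε) ⊆ A) :
    cthickening ε F ∩ closedBall x ρ = cthickening ε A ∩ closedBall x ρ := by
  refine Subset.antisymm ?_ (inter_subset_inter_left _ (cthickening_subset_of_subset ε hAF))
  rintro y ⟨hyF, hyx⟩
  rw [hF.cthickening_eq_biUnion_closedBall hε] at hyF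
  obtain ⟨z, hz, hyz⟩ := mem_iUnion₂.1 hyF
  have hzx : dist z x ≤ ρ + ε := calc
    dist z x ≤ dist y z + dist y x := dist_triangle_left z x y
    _ ≤ ε + ρ := add_le_add hyz hyx
    _ = ρ + ε := add_comm ε ρ
  exact ⟨mem_cthickening_of_dist_le y z ε A (hFA ⟨hz, hzx⟩) hyz, hyx⟩

lemma closedBall_subset_interior_of_lt_infDist_compl [PseudoMetricSpace X] {s : Set X} {x : X}
    {ρ : ℝ} (hρ : ρ < infDist x sᶜ) : closedBall x ρ ⊆ interior s :=
  (closedBall_subset_ball hρ).trans (interior_maximal ball_infDist_compl_subset isOpen_ball)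

lemma contractingWith_of_dist_le_mul [MetricSpace X] {f : X → X} {c : ℝ} (hc : c < 1)
    (hf : ∀ x y, dist (f x) (f y) ≤ c * dist x y) : ContractingWith c.toNNReal f :=
  ⟨Real.toNNReal_lt_one.2 hc, LipschitzWith.of_dist_le' hf⟩

lemma injective_of_dist_eq_mul {Y : Type*} [MetricSpace X] [PseudoMetricSpace Y] {f : X → Y}
    {c : ℝ} (hc : c ≠ 0) (hf : ∀ x y, dist (f x) (f y) = c * dist x y) : f.Injective := by
  intro x y hxy
  have h_zero : c * dist x y = 0 := by rw [← hf, hxy, dist_self]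
  exact dist_eq_zero.1 ((mul_eq_zero.1 h_zero).resolve_left hc)

end Metric

/-- The map `S_w = S_{w₁} ∘ ⋯ ∘ S_{wₙ}` attached to a finite word `w = w₁…wₙ`; the first letter is
applied last, and the empty word gives the identity. -/
def wordMap {ι X : Type*} (S : ι → X → X) (w : List ι) : X → X :=
  w.foldr (fun i g => S i ∘ g) id

section Words

variable {ι X : Type*} {S : ι → X → X}

lemma image_wordMap_cons (i : ι) (w : List ι) (A : Set X) :
    wordMap S (i :: w) '' A = S i '' (wordMap S w '' A) :=
  image_comp (S i) (wordMap S w) A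

lemma mapsTo_wordMap {A : Set X} (hA : ∀ i, MapsTo (S i) A A) (w : List ι) :
    MapsTo (wordMap S w) A A := by
  induction w with
  | nil => exact mapsTo_id A
  | cons i w ih => exact (hA i).comp ih

lemma inter_interior_image_wordMap_subset [TopologicalSpace X] {F J : Set X}
    (hS : ∀ i, Continuous (S i)) (hS_inj : ∀ i, (S i).Injective)
    (hF_sub : F ⊆ ⋃ i, S i '' F) (hFJ : F ⊆ J) (hJ : J ⊆ closure (interior J))
    (hJ_maps : ∀ i, MapsTo (S i) J J)
    (hJ_disj : Pairwise fun i j => Disjoint (S i '' interior J) (S j '' interior J))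
    (w : List ι) :
    F ∩ interior (wordMap S w '' J) ⊆ wordMap S w '' F := by
  induction w with
  | nil =>
    rintro z ⟨hz, -⟩
    exact ⟨z, hz, rfl⟩
  | cons i w ih =>
    rintro z ⟨hz, hz_int⟩
    rw [image_wordMap_cons] at hz_int ⊢
    obtain ⟨k, q, hq, rfl⟩ := mem_iUnion.1 (hF_sub hz)
    obtain rfl | hki := eq_or_ne k i
    · have hq_int : q ∈ interior (wordMap S w '' J) :=
        preimage_interior_image_subset_interior (hS k) (hS_inj k) hz_int
      exact mem_image_of_mem (S k) (ih ⟨hq, hq_int⟩)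
    · have h_int : S k q ∈ interior (S i '' J) :=
        interior_mono (image_mono (mapsTo_wordMap hJ_maps w).image_subset) hz_int
      have h_disj : Disjoint (S k '' J) (interior (S i '' J)) :=
        disjoint_image_interior_image (hS k) (hS i) (hS_inj i) hJ (hJ_disj hki)
      exact (disjoint_left.1 h_disj (mem_image_of_mem (S k) (hFJ hq)) h_int).elim

end Words

theorem statement11_general {ι X : Type*} [MetricSpace X] {S : ι → X → X} {K : ι → NNReal}
    (hS : ∀ i, ContractingWith (K i) (S i)) (hS_inj : ∀ i, (S i).Injective)
    {F : Set X} (hF : IsCompact F) (hF_self : F = ⋃ i, S i '' F)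
    {J : Set X} (hJ : J = closure (interior J)) (hJ_maps : ∀ i, MapsTo (S i) J J)
    (hJ_disj : Pairwise fun i j => Disjoint (S i '' interior J) (S j '' interior J))
    (w : List ι) {x : X} {ε ρ : ℝ} (hε : 0 ≤ ε)
    (hball : closedBall x (ρ + ε) ⊆ interior (wordMap S w '' J)) :
    cthickening ε F ∩ closedBall x ρ = cthickening ε (wordMap S w '' F) ∩ closedBall x ρ := by
  have hF_maps : ∀ i, MapsTo (S i) F F := fun i =>
    mapsTo_iff_image_subset.2 ((subset_iUnion _ i).trans_eq hF_self.symm)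
  refine cthickening_inter_closedBall_eq hF hε (mapsTo_wordMap hF_maps w).image_subset ?_
  rintro z ⟨hz, hzx⟩
  have hJ_ne : J.Nonempty := image_nonempty.1 ⟨z, interior_subset (hball hzx)⟩
  have hJ_closed : IsClosed J := hJ ▸ isClosed_closure
  have hFJ : F ⊆ J := subset_of_subset_iUnion_image hS hF hF_self.le hJ_closed hJ_ne hJ_maps
  exact inter_interior_image_wordMap_subset (fun i => (hS i).2.continuous) hS_inj hF_self.le hFJ
    hJ.le hJ_maps hJ_disj w ⟨hz, hball hzx⟩

/-- (Locality of parallel sets.) Under the open set condition for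
`J`, if `w` is a finite word, `S_w` the corresponding composed similarity,
`F_w = S_w(F)`, `J_w = S_w(J)`, `a ≥ 1`, `x ∈ F_w` and `ε > 0` with
`2aε < d(x, ℝ^d ∖ J_w)`, then `F(ε) ∩ B(x,aε) = F_w(ε) ∩ B(x,aε)`. -/
theorem statement11 (d N : ℕ) (hd : 1 ≤ d) (hN : 2 ≤ N)
    (S : Fin N → EuclideanSpace ℝ (Fin d) → EuclideanSpace ℝ (Fin d))
    (r : Fin N → ℝ) (hr : ∀ i, r i ∈ Set.Ioo (0 : ℝ) 1)
    (hS : ∀ i x y, dist (S i x) (S i y) = r i * dist x y)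
    (F : Set (EuclideanSpace ℝ (Fin d)))
    (hF_ne : F.Nonempty) (hF_cpt : IsCompact F)
    (hF_self : F = ⋃ i, S i '' F)
    (J : Set (EuclideanSpace ℝ (Fin d))) (hJ_cpt : IsCompact J)
    (hJ_reg : J = closure (interior J))
    (hJ_sub : ∀ i, S i '' J ⊆ J)
    (hJ_disj : ∀ i j, i ≠ j → Disjoint (S i '' interior J) (S j '' interior J))
    (w : List (Fin N))
    (a ε : ℝ) (ha : 1 ≤ a) (hε : 0 < ε)
    (x : EuclideanSpace ℝ (Fin d))
    (hx : x ∈ (w.foldr (fun i g => S i ∘ g) id) '' F)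
    (hsep : 2 * a * ε < Metric.infDist x ((w.foldr (fun i g => S i ∘ g) id) '' J)ᶜ) :
    Metric.cthickening ε F ∩ Metric.closedBall x (a * ε)
      = Metric.cthickening ε ((w.foldr (fun i g => S i ∘ g) id) '' F)
          ∩ Metric.closedBall x (a * ε) := by
  have h_radius : a * ε + ε ≤ 2 * a * ε := by nlinarith
  exact statement11_general
    (fun i => contractingWith_of_dist_le_mul (hr i).2 fun x y => (hS i x y).le)
    (fun i => injective_of_dist_eq_mul (hr i).1.ne' (hS i)) hF_cpt hF_self hJ_reg
    (fun i => mapsTo_iff_image_subset.2 (hJ_sub i)) hJ_disj w hε.le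
    (closedBall_subset_interior_of_lt_infDist_compl (h_radius.trans_lt hsep))
end

section
/- Let F ⊆ ℝ^d be compact, D > 0, and c_F ∈ (0,1] such that H^D(F ∩ B(y,r)) ≥ c_F r^D for all y ∈ F and all 0 < r ≤ diam F (lower Ahlfors regularity). Then for every ε > 0 with c_F^{−1/D} ε ≤ diam F and every x ∈ ℝ^d with d(x,F) ≤ ε, one has H^D(F ∩ B(x, 2 c_F^{−1/D} ε)) ≥ ε^D. Consequently, ρ_F(x,ε) := inf{ρ > 0 : H^D(F ∩ B(x,ρ)) ≥ ε^D} satisfies ρ_F(x,ε) ≤ 2 c_F^{−1/D} ε for every x in the closed ε-parallel set F(ε) := {z : d(z,F) ≤ ε}. -/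
open MeasureTheory Metric Filter Set
open scoped ENNReal Topology

/-!
Points of `F` almost realize the distance from `x` to `F`, and around each of them the regularity
hypothesis applies at radii just below `r = c_F ^ (-1/D) * ε`, where the lower bound
`c_F * r ^ D` equals `ε ^ D`. As `c_F ≤ 1` gives `ε ≤ r`, such balls fit into `B(x, 2 * r)`,
and the bound follows by letting their radii increase to `r`.
-/

/-- Lower Ahlfors regularity of the set `F` with respect to the measure `μ`, with exponent `D` and
constant `c`, at all scales up to `R`. The scale bound `R` is a free parameter instead of `diam F`,
so that unbounded sets, for which `Metric.diam F = 0`, are covered. -/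
def IsLowerAhlforsRegular {X : Type*} [PseudoMetricSpace X] [MeasurableSpace X]
    (μ : Measure X) (F : Set X) (D c R : ℝ) : Prop :=
  ∀ y ∈ F, ∀ r : ℝ, 0 < r → r ≤ R → ENNReal.ofReal (c * r ^ D) ≤ μ (F ∩ closedBall y r)

/-- The localization radius `ρ_F(x, ε)`, with the `D`-dimensional Hausdorff measure replaced by an
arbitrary measure `μ`. It is `0` by convention if no ball around `x` has enough mass. -/
noncomputable def localizationRadius {X : Type*} [PseudoMetricSpace X] [MeasurableSpace X]
    (μ : Measure X) (F : Set X) (D : ℝ) (x : X) (ε : ℝ) : ℝ :=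
  sInf {ρ : ℝ | 0 < ρ ∧ ENNReal.ofReal (ε ^ D) ≤ μ (F ∩ closedBall x ρ)}

theorem mul_rpow_neg_one_div_mul_rpow {c D ε : ℝ} (hc : 0 < c) (hD : D ≠ 0) (hε : 0 ≤ ε) :
    c * (c ^ (-(1 / D)) * ε) ^ D = ε ^ D := by
  have exponent_eq : -(1 / D) * D = -1 := by field_simp
  rw [Real.mul_rpow (by positivity) hε, ← Real.rpow_mul hc.le, exponent_eq, Real.rpow_neg_one,
    mul_inv_cancel_left₀ hc.ne']

theorem nonempty_of_diam_pos {X : Type*} [PseudoMetricSpace X] {F : Set X} (h : 0 < diam F) :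
    F.Nonempty :=
  nonempty_iff_ne_empty.2 fun hF => by simp [hF] at h

section PseudoMetricSpace

variable {X : Type*} [PseudoMetricSpace X] [MeasurableSpace X] {μ : Measure X} {F : Set X}
  {D c R ε : ℝ} {x : X}

theorem localizationRadius_le {ρ : ℝ} (hρ : 0 < ρ)
    (hmass : ENNReal.ofReal (ε ^ D) ≤ μ (F ∩ closedBall x ρ)) :
    localizationRadius μ F D x ε ≤ ρ :=
  csInf_le ⟨0, fun _ h => h.1.le⟩ ⟨hρ, hmass⟩

namespace IsLowerAhlforsRegular

theorem le_measure_closedBall_of_lt (hreg : IsLowerAhlforsRegular μ F D c R) (hF : F.Nonempty)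
    {δ s r : ℝ} (hx : infDist x F ≤ δ) (hs : 0 < s) (hsR : s ≤ R) (hsr : s < r) :
    ENNReal.ofReal (c * s ^ D) ≤ μ (F ∩ closedBall x (δ + r)) := by
  obtain ⟨y, hyF, hxy⟩ : ∃ y ∈ F, dist x y < δ + (r - s) :=
    (infDist_lt_iff hF).1 (by linarith)
  have closedBall_subset : closedBall y s ⊆ closedBall x (δ + r) :=
    closedBall_subset_closedBall' (by rw [dist_comm]; linarith)
  exact (hreg y hyF s hs hsR).trans (measure_mono (inter_subset_inter_right F closedBall_subset))

theorem le_measure_closedBall_add (hreg : IsLowerAhlforsRegular μ F D c R) (hF : F.Nonempty)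
    {δ r : ℝ} (hx : infDist x F ≤ δ) (hr : 0 < r) (hrR : r ≤ R) :
    ENNReal.ofReal (c * r ^ D) ≤ μ (F ∩ closedBall x (δ + r)) := by
  have tendsto_bound : Tendsto (fun s : ℝ => ENNReal.ofReal (c * s ^ D)) (𝓝[<] r)
      (𝓝 (ENNReal.ofReal (c * r ^ D))) :=
    ENNReal.tendsto_ofReal (((Real.continuousAt_rpow_const r D (Or.inl hr.ne')).tendsto.mono_left
      nhdsWithin_le_nhds).const_mul c)
  refine le_of_tendsto tendsto_bound ?_
  filter_upwards [Ioo_mem_nhdsLT hr] with s ⟨hs, hsr⟩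
  exact hreg.le_measure_closedBall_of_lt hF hx hs (hsr.le.trans hrR) hsr

theorem ofReal_rpow_le_measure_closedBall (hreg : IsLowerAhlforsRegular μ F D c R)
    (hF : F.Nonempty) (hD : 0 < D) (hc : c ∈ Ioc (0 : ℝ) 1) (hε : 0 < ε)
    (hεR : c ^ (-(1 / D)) * ε ≤ R) (hx : infDist x F ≤ ε) :
    ENNReal.ofReal (ε ^ D) ≤ μ (F ∩ closedBall x (2 * c ^ (-(1 / D)) * ε)) := by
  obtain ⟨hc_pos, hc_le⟩ := hc
  have one_le_factor : 1 ≤ c ^ (-(1 / D)) :=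
    Real.one_le_rpow_of_pos_of_le_one_of_nonpos hc_pos hc_le (by simp [hD.le])
  have infDist_le : infDist x F ≤ c ^ (-(1 / D)) * ε :=
    hx.trans (le_mul_of_one_le_left hε.le one_le_factor)
  have mass := hreg.le_measure_closedBall_add hF infDist_le (by positivity) hεR
  rwa [mul_rpow_neg_one_div_mul_rpow hc_pos hD.ne' hε.le, ← two_mul, ← mul_assoc] at mass

end IsLowerAhlforsRegular

theorem statement16_general (hF : F.Nonempty) (hD : 0 < D) (hc : c ∈ Ioc (0 : ℝ) 1)
    (hreg : IsLowerAhlforsRegular μ F D c R) (hε : 0 < ε) (hεR : c ^ (-(1 / D)) * ε ≤ R) :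
    (∀ x : X, infDist x F ≤ ε →
      ENNReal.ofReal (ε ^ D) ≤ μ (F ∩ closedBall x (2 * c ^ (-(1 / D)) * ε)))
    ∧ (∀ x ∈ cthickening ε F, localizationRadius μ F D x ε ≤ 2 * c ^ (-(1 / D)) * ε) := by
  have mass : ∀ x : X, infDist x F ≤ ε →
      ENNReal.ofReal (ε ^ D) ≤ μ (F ∩ closedBall x (2 * c ^ (-(1 / D)) * ε)) :=
    fun _ hx => hreg.ofReal_rpow_le_measure_closedBall hF hD hc hε hεR hx
  have hc_pos : 0 < c := hc.1
  refine ⟨mass, fun x hx => localizationRadius_le (by positivity) (mass x ?_)⟩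
  exact ENNReal.toReal_le_of_le_ofReal hε.le (mem_cthickening_iff.1 hx)

end PseudoMetricSpace

/-- Let `F ⊆ ℝ^d` be compact, `D > 0`, `c_F ∈ (0,1]` with the lower
Ahlfors regularity `H^D(F ∩ B(y,r)) ≥ c_F r^D` for `y ∈ F`, `0 < r ≤ diam F`.  Then
for every `ε > 0` with `c_F^{-1/D} ε ≤ diam F` and every `x` with `d(x,F) ≤ ε` one has
`H^D(F ∩ B(x, 2 c_F^{-1/D} ε)) ≥ ε^D`; consequently the localization radius
`ρ_F(x,ε) := inf{ρ > 0 : H^D(F ∩ B(x,ρ)) ≥ ε^D}` satisfies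
`ρ_F(x,ε) ≤ 2 c_F^{-1/D} ε` for every `x` in the closed parallel set `F(ε)`. -/
theorem statement16 (d : ℕ) (F : Set (EuclideanSpace ℝ (Fin d))) (hF_cpt : IsCompact F)
    (D : ℝ) (hD : 0 < D) (c_F : ℝ) (hc : c_F ∈ Set.Ioc (0 : ℝ) 1)
    (hreg : ∀ y ∈ F, ∀ ρ : ℝ, 0 < ρ → ρ ≤ Metric.diam F →
      ENNReal.ofReal (c_F * ρ ^ D) ≤ μH[D] (F ∩ Metric.closedBall y ρ))
    (ε : ℝ) (hε : 0 < ε) (hε_diam : c_F ^ (-(1 / D)) * ε ≤ Metric.diam F) :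
    (∀ x : EuclideanSpace ℝ (Fin d), Metric.infDist x F ≤ ε →
      ENNReal.ofReal (ε ^ D)
        ≤ μH[D] (F ∩ Metric.closedBall x (2 * c_F ^ (-(1 / D)) * ε)))
    ∧ (∀ x ∈ Metric.cthickening ε F,
        sInf {ρ : ℝ | 0 < ρ ∧
            ENNReal.ofReal (ε ^ D) ≤ μH[D] (F ∩ Metric.closedBall x ρ)}
          ≤ 2 * c_F ^ (-(1 / D)) * ε) := by
  have diam_pos := (mul_pos (Real.rpow_pos_of_pos hc.1 (-(1 / D))) hε).trans_le hε_diam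
  exact statement16_general (nonempty_of_diam_pos diam_pos) hD hc hreg hε hε_diam
end
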